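/- (Upper-bound propagation step.) Let $1\le k\le n$ and $U=\{1,\dots,n\}$, and let each item $a\in U$ have a utility $u_a\in\mathbb R$ and a consideration probability $p_a\in(0,1]$. A ranking is a $k$-tuple $r=(r_1,\dots,r_k)$ of distinct items of $U$. For $C\subseteq U$ put $$\Pr\nolimits_{PL}(r\mid C)=\prod_{s=1}^k\frac{\exp(u_{r_s})}{\sum_{t\in C\setminus\{r_1,\dots,r_{s-1}\}}\exp(u_t)}\quad\text{if }\{r_1,\dots,r_k\}\subseteq C,\qquad \Pr\nolimits_{PL}(r\mid C)=0\ \text{otherwise};$$ put $w(C)=\prod_{a\in C}p_a\prod_{a\in U\setminus C}(1-p_a)$, and let $\Pr_C(C)=w(C)/\sum_{C'\subseteq U,\,|C'|\ge k}w(C')$ if $|C|\ge k$ and $\Pr_C(C)=0$ otherwise. The PL+C probability of a ranking is $\Pr_{PL+C}(r)=\sum_{C\subseteq U}\Pr_C(C)\,\Pr_{PL}(r\mid C)$, and that of a set $R$ of rankings is $\Pr_{PL+C}(R)=\sum_{r\in R}\Pr_{PL+C}(r)$. Let $R_{a\le\ell}$ be the set of rankings with item $a$ in one of the top $\ell$ positions.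 Let $i,j\in U$ with $u_i>u_j$, and let $1\le\ell\le k$ with $\ell<n$. (Thus only the degenerate case $\ell=k=n$, in which every ranking lists every item, is excluded.) Suppose that $$c=\frac{\Pr_{PL+C}(R_{i\le\ell})}{\Pr_{PL+C}(R_{j\le\ell})}\le 1,$$ and that $b_j\in(0,1]$ satisfies $p_j\le b_j$. Then $$p_i\le\frac{c\,b_j}{1-b_j+c\,b_j}.$$ -/

import Mathlib

noncomputable section

/-- Unnormalized weight of a consideration set `C`: the items of `C` are considered,
the items outside `C` are not, independently. -/
def considerWeight (n : ℕ) (p : Fin n → ℝ) (C : Finset (Fin n)) : ℝ :=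
  (∏ i ∈ C, p i) * ∏ j ∈ Cᶜ, (1 - p j)

/-- Normalizing constant `z_{k,p}`: total weight of the consideration sets of size at least `k`. -/
def zConst (n k : ℕ) (p : Fin n → ℝ) : ℝ :=
  ∑ C ∈ Finset.univ.filter (fun C : Finset (Fin n) => k ≤ C.card), considerWeight n p C

/-- Probability of the consideration set `C`, conditioned on `|C| ≥ k`. -/
def prC (n k : ℕ) (p : Fin n → ℝ) (C : Finset (Fin n)) : ℝ :=
  if k ≤ C.card then considerWeight n p C / zConst n k p else 0

/-- Plackett–Luce probability of the length-`k` ranking `r` given the consideration set `C`.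
A ranking is an injective map from positions (`0` is the top one) to items. -/
def prPL (n k : ℕ) (u : Fin n → ℝ) (r : Fin k ↪ Fin n) (C : Finset (Fin n)) : ℝ :=
  if ∀ t : Fin k, r t ∈ C then
    ∏ t : Fin k, Real.exp (u (r t)) /
      ∑ j ∈ C \ (Finset.Iio t).image r, Real.exp (u j)
  else 0

/-- Plackett–Luce-with-consideration (PL+C) probability of the ranking `r`. -/
def prPLC (n k : ℕ) (u p : Fin n → ℝ) (r : Fin k ↪ Fin n) : ℝ :=
  ∑ C : Finset (Fin n), prC n k p C * prPL n k u r C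

/-- PL+C probability of a set of rankings. -/
def prPLCset (n k : ℕ) (u p : Fin n → ℝ) (R : Finset (Fin k ↪ Fin n)) : ℝ :=
  ∑ r ∈ R, prPLC n k u p r

/-- `R_{i≤ℓ}`: the set of length-`k` rankings with item `i` in one of the top `ℓ` positions. -/
def topSet (n k : ℕ) (i : Fin n) (ℓ : ℕ) : Finset (Fin k ↪ Fin n) :=
  Finset.univ.filter (fun r => ∃ t : Fin k, (t : ℕ) < ℓ ∧ r t = i)

end

open Finset

/-- Probability that an item of weight `x`, competing with the items of `S` of weights `v`, is not
among the first `l` items drawn without replacement, proportionally to the weights. -/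
noncomputable def avoidProb {α : Type*} [DecidableEq α] (v : α → ℝ) (x : ℝ) : ℕ → Finset α → ℝ
  | 0, _ => 1
  | l + 1, S => ∑ b ∈ S, v b / (x + ∑ a ∈ S, v a) * avoidProb v x l (S.erase b)

section AvoidProb

variable {α : Type*} [DecidableEq α] {v : α → ℝ}

lemma avoidProb_nonneg (hv : ∀ a, 0 < v a) {x : ℝ} (hx : 0 < x) (l : ℕ) (S : Finset α) :
    0 ≤ avoidProb v x l S := by
  induction l generalizing S with
  | zero => simp [avoidProb]
  | succ l ih =>
    have hS : 0 ≤ ∑ a ∈ S, v a := sum_nonneg fun a _ => (hv a).le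
    exact sum_nonneg fun b _ => mul_nonneg (div_nonneg (hv b).le (by linarith)) (ih _)

lemma avoidProb_pos (hv : ∀ a, 0 < v a) {x : ℝ} (hx : 0 < x) (l : ℕ) (S : Finset α)
    (hl : l ≤ S.card) : 0 < avoidProb v x l S := by
  induction l generalizing S with
  | zero => simp [avoidProb]
  | succ l ih =>
    have hS : 0 ≤ ∑ a ∈ S, v a := sum_nonneg fun a _ => (hv a).le
    refine sum_pos (fun b hb => mul_pos (div_pos (hv b) (by linarith)) (ih _ ?_))
      (card_pos.mp (by omega))
    rw [card_erase_of_mem hb]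
    omega

lemma avoidProb_antitone (hv : ∀ a, 0 < v a) {x y : ℝ} (hx : 0 < x) (hxy : x ≤ y) (l : ℕ)
    (S : Finset α) : avoidProb v y l S ≤ avoidProb v x l S := by
  induction l generalizing S with
  | zero => simp [avoidProb]
  | succ l ih =>
    have hS : 0 ≤ ∑ a ∈ S, v a := sum_nonneg fun a _ => (hv a).le
    refine sum_le_sum fun b _ => mul_le_mul ?_ (ih _)
      (avoidProb_nonneg hv (hx.trans_le hxy) _ _) (div_nonneg (hv b).le (by linarith))
    exact div_le_div_of_nonneg_left (hv b).le (by linarith) (by linarith)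

lemma avoidProb_le_one (hv : ∀ a, 0 < v a) {x : ℝ} (hx : 0 < x) (l : ℕ) (S : Finset α) :
    avoidProb v x l S ≤ 1 := by
  induction l generalizing S with
  | zero => simp [avoidProb]
  | succ l ih =>
    have hS : 0 ≤ ∑ a ∈ S, v a := sum_nonneg fun a _ => (hv a).le
    calc avoidProb v x (l + 1) S ≤ ∑ b ∈ S, v b / (x + ∑ a ∈ S, v a) :=
          sum_le_sum fun b _ => mul_le_of_le_one_right (div_nonneg (hv b).le (by linarith)) (ih _)
      _ ≤ 1 := by
          rw [← sum_div]
          exact (div_le_one (by linarith)).2 (by linarith)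

lemma avoidProb_lt_one (hv : ∀ a, 0 < v a) {x : ℝ} (hx : 0 < x) {l : ℕ} (hl : 1 ≤ l)
    (S : Finset α) : avoidProb v x l S < 1 := by
  obtain ⟨l, rfl⟩ : ∃ m, l = m + 1 := ⟨l - 1, by omega⟩
  have hS : 0 ≤ ∑ a ∈ S, v a := sum_nonneg fun a _ => (hv a).le
  calc avoidProb v x (l + 1) S ≤ ∑ b ∈ S, v b / (x + ∑ a ∈ S, v a) :=
        sum_le_sum fun b _ => mul_le_of_le_one_right (div_nonneg (hv b).le (by linarith))
          (avoidProb_le_one hv hx l _)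
    _ < 1 := by
        rw [← sum_div]
        exact (div_lt_one (by linarith)).2 (by linarith)

lemma avoidProb_succ_insert (x : ℝ) (l : ℕ) {S : Finset α} {j : α} (hj : j ∉ S) :
    avoidProb v x (l + 1) (insert j S) =
      v j / (x + v j + ∑ a ∈ S, v a) * avoidProb v x l S +
      ∑ b ∈ S, v b / (x + v j + ∑ a ∈ S, v a) * avoidProb v x l (insert j (S.erase b)) := by
  rw [avoidProb, sum_insert hj, sum_insert hj, erase_insert hj, ← add_assoc]
  congr 1
  refine sum_congr rfl fun b hb => ?_
  rw [erase_insert_of_ne (by rintro rfl; exact hj hb)]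

lemma avoidProb_insert_le (hv : ∀ a, 0 < v a) {i j : α} (hij : v j ≤ v i) (l : ℕ)
    (S : Finset α) (hi : i ∉ S) (hj : j ∉ S) :
    avoidProb v (v i) l (insert j S) ≤ avoidProb v (v j) l (insert i S) := by
  induction l generalizing S with
  | zero => simp [avoidProb]
  | succ l ih =>
    have hS : 0 ≤ ∑ a ∈ S, v a := sum_nonneg fun a _ => (hv a).le
    have hvi := hv i
    have hvj := hv j
    have hZ : 0 < v j + v i + ∑ a ∈ S, v a := by linarith
    rw [avoidProb_succ_insert _ _ hj, avoidProb_succ_insert _ _ hi, add_comm (v i) (v j)]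
    refine add_le_add (mul_le_mul ?_ (avoidProb_antitone hv hvj hij _ _)
      (avoidProb_nonneg hv hvi _ _) (by positivity)) (sum_le_sum fun b hb => ?_)
    · gcongr
    · exact mul_le_mul_of_nonneg_left
        (ih _ (fun h => hi (mem_of_mem_erase h)) (fun h => hj (mem_of_mem_erase h)))
        (div_nonneg (hv b).le hZ.le)

lemma avoidProb_insert_lt (hv : ∀ a, 0 < v a) {i j : α} (hij : v j < v i) {l : ℕ} (hl : 1 ≤ l)
    (S : Finset α) (hi : i ∉ S) (hj : j ∉ S) (hlS : l ≤ S.card + 1) :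
    avoidProb v (v i) l (insert j S) < avoidProb v (v j) l (insert i S) := by
  obtain ⟨l, rfl⟩ : ∃ m, l = m + 1 := ⟨l - 1, by omega⟩
  have hS : 0 ≤ ∑ a ∈ S, v a := sum_nonneg fun a _ => (hv a).le
  have hvi := hv i
  have hvj := hv j
  have hZ : 0 < v j + v i + ∑ a ∈ S, v a := by linarith
  rw [avoidProb_succ_insert _ _ hj, avoidProb_succ_insert _ _ hi, add_comm (v i) (v j)]
  refine add_lt_add_of_lt_of_le (mul_lt_mul ?_ (avoidProb_antitone hv hvj hij.le _ _)
    (avoidProb_pos hv hvi _ _ (by omega)) (by positivity)) (sum_le_sum fun b hb => ?_)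
  · gcongr
  · exact mul_le_mul_of_nonneg_left
      (avoidProb_insert_le hv hij.le _ _ (fun h => hi (mem_of_mem_erase h))
        (fun h => hj (mem_of_mem_erase h)))
      (div_nonneg (hv b).le hZ.le)

end AvoidProb

/-- Plackett–Luce probability of a sequence of draws without replacement from `C`; it vanishes on
sequences that leave `C` or repeat an item. -/
noncomputable def drawProb {α : Type*} [DecidableEq α] (v : α → ℝ) :
    (k : ℕ) → (Fin k → α) → Finset α → ℝ
  | 0, _, _ => 1
  | k + 1, r, C =>
    if r 0 ∈ C then v (r 0) / (∑ a ∈ C, v a) * drawProb v k (Fin.tail r) (C.erase (r 0)) else 0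

section DrawProb

variable {α : Type*} [DecidableEq α] {v : α → ℝ}

lemma mem_of_drawProb_ne_zero {k : ℕ} {r : Fin k → α} {C : Finset α}
    (h : drawProb v k r C ≠ 0) (t : Fin k) : r t ∈ C := by
  induction k generalizing C with
  | zero => exact t.elim0
  | succ k ih =>
    rw [drawProb] at h
    split_ifs at h with h0
    · refine Fin.cases h0 (fun s => ?_) t
      exact mem_of_mem_erase (ih (right_ne_zero_of_mul h) s)
    · exact absurd rfl h

lemma injective_of_drawProb_ne_zero {k : ℕ} {r : Fin k → α} {C : Finset α}
    (h : drawProb v k r C ≠ 0) : Function.Injective r := by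
  induction k generalizing C with
  | zero => exact fun t => t.elim0
  | succ k ih =>
    rw [drawProb] at h
    split_ifs at h with h0
    · have h' := right_ne_zero_of_mul h
      rw [← Fin.cons_self_tail r, Fin.cons_injective_iff]
      refine ⟨?_, ih h'⟩
      rintro ⟨s, hs⟩
      exact (mem_erase.mp (mem_of_drawProb_ne_zero h' s)).1 hs
    · exact absurd rfl h

lemma drawProb_eq_prod {k : ℕ} {r : Fin k → α} (hr : Function.Injective r) {C : Finset α}
    (hC : ∀ t, r t ∈ C) :
    drawProb v k r C = ∏ t, v (r t) / ∑ a ∈ C \ (Iio t).image r, v a := by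
  induction k generalizing C with
  | zero => simp [drawProb]
  | succ k ih =>
    rw [drawProb, if_pos (hC 0), Fin.prod_univ_succ]
    have htail : Function.Injective (Fin.tail r) := hr.comp (Fin.succ_injective k)
    rw [ih htail fun t => mem_erase.mpr ⟨fun h => Fin.succ_ne_zero t (hr h), hC t.succ⟩]
    congr 1
    · have : Iio (0 : Fin (k + 1)) = ∅ := by ext; simp
      simp [this]
    · refine prod_congr rfl fun t _ => ?_
      have : C \ (Iio t.succ).image r = C.erase (r 0) \ (Iio t).image (Fin.tail r) := by
        ext a
        simp only [mem_sdiff, mem_image, mem_Iio, mem_erase, Fin.exists_fin_succ, Fin.tail,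
          Fin.succ_pos, true_and, Fin.succ_lt_succ_iff, not_or, ne_comm (a := a), ne_eq]
        tauto
      rw [this]
      rfl

variable [Fintype α]

lemma sum_fin_succ_drawProb (k : ℕ) (C : Finset α) (q : α → (Fin k → α) → ℝ) :
    ∑ r : Fin (k + 1) → α, q (r 0) (Fin.tail r) * drawProb v (k + 1) r C =
      ∑ b ∈ C, v b / (∑ a ∈ C, v a) * ∑ r, q b r * drawProb v k r (C.erase b) := by
  rw [← (Fin.consEquiv fun _ => α).sum_comp, Fintype.sum_prod_type,
    ← sum_subset (subset_univ C) fun b _ hb => ?_]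
  · refine sum_congr rfl fun b hb => ?_
    rw [mul_sum]
    refine sum_congr rfl fun r _ => ?_
    have htail : Fin.tail (Fin.consEquiv (fun _ => α) (b, r)) = r := rfl
    simp only [drawProb, htail, Fin.consEquiv_apply, Fin.cons_zero, if_pos hb]
    ring
  · simp [drawProb, hb]

lemma sum_drawProb (hv : ∀ a, 0 < v a) (k : ℕ) (C : Finset α) (hk : k ≤ C.card) :
    ∑ r, drawProb v k r C = 1 := by
  induction k generalizing C with
  | zero => simp [drawProb]
  | succ k ih =>
    have h := sum_fin_succ_drawProb (v := v) k C fun _ _ => 1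
    simp only [one_mul] at h
    rw [h]
    have hC : 0 < ∑ a ∈ C, v a := sum_pos (fun a _ => hv a) (card_pos.mp (by omega))
    rw [← div_self hC.ne', sum_div]
    refine sum_congr rfl fun b hb => ?_
    rw [ih _ (by rw [card_erase_of_mem hb]; omega), mul_one]

lemma sum_drawProb_avoid (hv : ∀ a, 0 < v a) (k l : ℕ) (hlk : l ≤ k) (C : Finset α)
    (hk : k ≤ C.card) {a : α} (ha : a ∈ C) :
    ∑ r : Fin k → α, (if ∀ t : Fin k, (t : ℕ) < l → r t ≠ a then 1 else 0) * drawProb v k r C =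
      avoidProb v (v a) l (C.erase a) := by
  induction l generalizing k C with
  | zero => simpa [avoidProb] using sum_drawProb hv k C hk
  | succ l ih =>
    obtain ⟨k, rfl⟩ : ∃ m, k = m + 1 := ⟨k - 1, by omega⟩
    have h := sum_fin_succ_drawProb (v := v) k C fun b r =>
      (if b ≠ a then 1 else 0) * if ∀ t : Fin k, (t : ℕ) < l → r t ≠ a then 1 else 0
    have hq : ∀ r : Fin (k + 1) → α,
        (if ∀ t : Fin (k + 1), (t : ℕ) < l + 1 → r t ≠ a then (1 : ℝ) else 0) =
          (if r 0 ≠ a then 1 else 0) *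
            if ∀ t : Fin k, (t : ℕ) < l → Fin.tail r t ≠ a then 1 else 0 := by
      intro r
      rw [ite_zero_mul_ite_zero, mul_one]
      refine if_congr ?_ rfl rfl
      simp [Fin.forall_fin_succ, Fin.tail]
    simp only [hq]
    rw [h, avoidProb, add_sum_erase _ _ ha, ← add_sum_erase _ _ ha]
    simp only [ne_eq, not_true_eq_false, if_false, zero_mul, sum_const_zero, mul_zero, zero_add]
    refine sum_congr rfl fun b hb => ?_
    obtain ⟨hba, hbC⟩ := mem_erase.mp hb
    simp only [hba, not_false_eq_true, if_true, one_mul]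
    rw [erase_right_comm, ← ih k (by omega) (C.erase b) (by rw [card_erase_of_mem hbC]; omega)
      (mem_erase.mpr ⟨hba.symm, ha⟩)]

end DrawProb

/-- Plackett–Luce probability that `a` is in one of the top `ℓ` positions, given `C`. -/
noncomputable def topProb (n k ℓ : ℕ) (u : Fin n → ℝ) (a : Fin n) (C : Finset (Fin n)) : ℝ :=
  ∑ r ∈ topSet n k a ℓ, prPL n k u r C

lemma prPL_eq_drawProb {n k : ℕ} (u : Fin n → ℝ) (r : Fin k ↪ Fin n) (C : Finset (Fin n)) :
    prPL n k u r C = drawProb (fun a => Real.exp (u a)) k r C := by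
  unfold prPL
  split_ifs with h
  · rw [drawProb_eq_prod r.injective h]
  · by_contra h'
    exact h (mem_of_drawProb_ne_zero (Ne.symm h'))

lemma topProb_of_notMem {n k ℓ : ℕ} (u : Fin n → ℝ) {a : Fin n} {C : Finset (Fin n)}
    (ha : a ∉ C) : topProb n k ℓ u a C = 0 := by
  refine sum_eq_zero fun r hr => ?_
  obtain ⟨t, -, rfl⟩ := (mem_filter.mp hr).2
  exact if_neg fun h => ha (h t)

lemma topProb_of_mem {n k ℓ : ℕ} (u : Fin n → ℝ) {a : Fin n} {C : Finset (Fin n)}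
    (ha : a ∈ C) (hℓk : ℓ ≤ k) (hk : k ≤ C.card) :
    topProb n k ℓ u a C =
      1 - avoidProb (fun a => Real.exp (u a)) (Real.exp (u a)) ℓ (C.erase a) := by
  have hv : ∀ a, 0 < Real.exp (u a) := fun a => Real.exp_pos _
  have h1 := sum_drawProb hv k C hk
  have h2 := sum_drawProb_avoid hv k ℓ hℓk C hk ha
  rw [← h1, ← h2, ← sum_sub_distrib, topProb, topSet, sum_filter]
  simp only [prPL_eq_drawProb]
  let f : (Fin k → Fin n) → ℝ := fun r =>
    if ∃ t : Fin k, (t : ℕ) < ℓ ∧ r t = a then drawProb (fun a => Real.exp (u a)) k r C else 0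
  calc _ = ∑ r : Fin k ↪ Fin n, f r := rfl
    _ = ∑ r : Fin k → Fin n, f r := by
      refine sum_of_injOn (fun r => (r : Fin k → Fin n)) DFunLike.coe_injective.injOn
        (by simp) (fun r _ hr => ?_) (fun _ _ => rfl)
      by_contra hf
      have : drawProb (fun a => Real.exp (u a)) k r C ≠ 0 := fun h0 => hf (by simp [f, h0])
      exact hr ⟨⟨r, injective_of_drawProb_ne_zero this⟩, by simp, rfl⟩
    _ = _ := by
      refine sum_congr rfl fun r _ => ?_
      by_cases h : ∃ t : Fin k, (t : ℕ) < ℓ ∧ r t = a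
      · have h' : ¬ ∀ t : Fin k, (t : ℕ) < ℓ → r t ≠ a := by push Not; exact h
        simp only [f, if_pos h, if_neg h', zero_mul, sub_zero]
      · have h' : ∀ t : Fin k, (t : ℕ) < ℓ → r t ≠ a := by push Not at h; exact h
        simp only [f, if_neg h, if_pos h', one_mul, sub_self]

/-- Weighted sum of the top-`ℓ` probabilities of `a`, before normalization. -/
noncomputable def topMass (n k ℓ : ℕ) (u p : Fin n → ℝ) (a : Fin n) : ℝ :=
  ∑ C : Finset (Fin n), if k ≤ C.card then considerWeight n p C * topProb n k ℓ u a C else 0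

lemma prPLCset_topSet {n k ℓ : ℕ} (u p : Fin n → ℝ) (a : Fin n) :
    prPLCset n k u p (topSet n k a ℓ) = topMass n k ℓ u p a / zConst n k p := by
  simp only [prPLCset, prPLC, topMass]
  rw [sum_comm, sum_div]
  refine sum_congr rfl fun C _ => ?_
  rw [← mul_sum, ← topProb, prC]
  split_ifs
  · ring
  · simp

lemma considerWeight_nonneg {n : ℕ} {p : Fin n → ℝ} (hp : ∀ a, 0 < p a ∧ p a ≤ 1)
    (C : Finset (Fin n)) : 0 ≤ considerWeight n p C :=
  mul_nonneg (prod_nonneg fun a _ => (hp a).1.le)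
    (prod_nonneg fun a _ => sub_nonneg.mpr (hp a).2)

lemma zConst_pos {n k : ℕ} {p : Fin n → ℝ} (hp : ∀ a, 0 < p a ∧ p a ≤ 1) (hkn : k ≤ n) :
    0 < zConst n k p := by
  refine sum_pos' (fun C _ => considerWeight_nonneg hp C) ⟨univ, by simpa using hkn, ?_⟩
  simpa [considerWeight] using prod_pos fun a _ => (hp a).1

/-- Weight of the part `S` of a consideration set that lies in `T`. -/
noncomputable def partWeight {n : ℕ} (p : Fin n → ℝ) (T S : Finset (Fin n)) : ℝ :=
  (∏ a ∈ S, p a) * ∏ a ∈ T \ S, (1 - p a)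

lemma partWeight_nonneg {n : ℕ} {p : Fin n → ℝ} (hp : ∀ a, 0 < p a ∧ p a ≤ 1)
    (T S : Finset (Fin n)) : 0 ≤ partWeight p T S :=
  mul_nonneg (prod_nonneg fun a _ => (hp a).1.le)
    (prod_nonneg fun a _ => sub_nonneg.mpr (hp a).2)

lemma partWeight_self_pos {n : ℕ} {p : Fin n → ℝ} (hp : ∀ a, 0 < p a ∧ p a ≤ 1)
    (T : Finset (Fin n)) : 0 < partWeight p T T := by
  simpa [partWeight] using prod_pos fun a _ => (hp a).1

section Split

variable {n : ℕ} {p : Fin n → ℝ} {i j : Fin n} {T S : Finset (Fin n)}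

lemma considerWeight_insert (hT : insert i T = univ) (hi : i ∉ T)
    (hS : S ⊆ T) :
    considerWeight n p (insert i S) = p i * partWeight p T S := by
  have hc : (insert i S)ᶜ = T \ S := by
    ext a
    have ha : a ∈ insert i T := hT ▸ mem_univ a
    simp only [mem_insert] at ha
    simp only [mem_compl, mem_insert, mem_sdiff]
    constructor
    · tauto
    · rintro ⟨h1, h2⟩ (rfl | h)
      · exact hi h1
      · exact h2 h
  rw [considerWeight, hc, prod_insert fun h => hi (hS h), partWeight, mul_assoc]

lemma partWeight_insert_insert (hj : j ∉ T) (hS : S ⊆ T) :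
    partWeight p (insert j T) (insert j S) = p j * partWeight p T S := by
  rw [partWeight, prod_insert fun h => hj (hS h), insert_sdiff_insert,
    sdiff_insert_of_notMem hj, partWeight, mul_assoc]

lemma partWeight_insert (hj : j ∉ T) (hS : S ⊆ T) :
    partWeight p (insert j T) S = (1 - p j) * partWeight p T S := by
  rw [partWeight, insert_sdiff_of_notMem _ fun h => hj (hS h),
    prod_insert (by simp [hj]), partWeight]
  ring

/-- Decomposition of `topMass` according to the items considered besides `i` and `j`. -/
lemma topMass_eq {k ℓ : ℕ} (u : Fin n → ℝ) (hT : insert i (insert j T) = univ)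
    (hij : i ≠ j) (hi : i ∉ T) (hj : j ∉ T) :
    topMass n k ℓ u p i =
      p i * p j * (∑ S ∈ T.powerset, if k ≤ S.card + 2 then
        partWeight p T S * topProb n k ℓ u i (insert i (insert j S)) else 0) +
      p i * (1 - p j) * ∑ S ∈ T.powerset, if k ≤ S.card + 1 then
        partWeight p T S * topProb n k ℓ u i (insert i S) else 0 := by
  have hi' : i ∉ insert j T := by simp [hij, hi]
  rw [topMass, ← powerset_univ, ← hT, sum_powerset_insert hi']
  rw [sum_eq_zero (s := (insert j T).powerset), zero_add, sum_powerset_insert hj, add_comm,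
    mul_sum, mul_sum]
  · congr 1 <;> refine sum_congr rfl fun S hS => ?_ <;> rw [mem_powerset] at hS
    · have h1 : j ∉ S := fun h => hj (hS h)
      have h2 : i ∉ insert j S := fun h => hi' (insert_subset_insert j hS h)
      rw [card_insert_of_notMem h2, card_insert_of_notMem h1,
        considerWeight_insert hT hi' (insert_subset_insert j hS),
        partWeight_insert_insert hj hS, mul_ite, mul_zero]
      congr 1
      ring
    · have h2 : i ∉ S := fun h => hi (hS h)
      rw [card_insert_of_notMem h2,
        considerWeight_insert hT hi' (hS.trans (subset_insert j T)),
        partWeight_insert hj hS, mul_ite, mul_zero]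
      congr 1
      ring
  · intro S hS
    rw [topProb_of_notMem u fun h => hi' (mem_powerset.mp hS h)]
    simp

end Split

/-- The algebraic core: `A, A'` and `B, B'` are the top-`ℓ` masses of the two items when both,
resp. only the one in question, are considered. -/
lemma odds_le_of_ratio {x y A A' B B' c : ℝ} (hx0 : 0 < x) (hx1 : x ≤ 1) (hy0 : 0 < y)
    (hy1 : y ≤ 1) (hA' : 0 < A') (hA : A' < A) (hB' : 0 ≤ B') (hB : B' ≤ B)
    (hc : c = (x * y * A + x * (1 - y) * B) / (y * x * A' + y * (1 - x) * B')) (hc1 : c ≤ 1) :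
    0 < c ∧ x * (1 - y) ≤ c * (y * (1 - x)) := by
  have hx : 0 ≤ 1 - x := by linarith
  have hy : 0 ≤ 1 - y := by linarith
  have hden : 0 < y * x * A' + y * (1 - x) * B' := by positivity
  have hA0 : 0 < A := hA'.trans hA
  have hB0 : 0 ≤ B := hB'.trans hB
  have hc0 : 0 < c := by rw [hc]; positivity
  refine ⟨hc0, ?_⟩
  rw [hc, div_le_one hden] at hc1
  have hxy : 0 < x * y := mul_pos hx0 hy0
  have hB0' : 0 < B := by
    by_contra hn
    have hBz : B = 0 := le_antisymm (not_lt.mp hn) hB0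
    have hBz' : B' = 0 := le_antisymm (hBz ▸ hB) hB'
    rw [hBz, hBz'] at hc1
    linarith [mul_lt_mul_of_pos_left hA hxy]
  have hodds : x * (1 - y) ≤ y * (1 - x) := by
    refine le_of_mul_le_mul_right ?_ hB0'
    have h1 := mul_le_mul_of_nonneg_left hB (mul_nonneg hy0.le hx)
    have h2 := mul_le_mul_of_nonneg_left hA.le hxy.le
    linarith
  rw [hc, div_mul_eq_mul_div, le_div_iff₀ hden]
  have h1 : x * (1 - y) * A' ≤ y * (1 - x) * A :=
    mul_le_mul hodds hA.le hA'.le (mul_nonneg hy0.le hx)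
  have h2 := mul_le_mul_of_nonneg_left h1 hxy.le
  have h3 := mul_le_mul_of_nonneg_left hB
    (mul_nonneg (mul_nonneg hx0.le hy) (mul_nonneg hy0.le hx))
  linarith

lemma le_of_odds_le {x y b c : ℝ} (hx0 : 0 < x) (hx1 : x ≤ 1) (hy0 : 0 < y)
    (hyb : y ≤ b) (hb1 : b ≤ 1) (hc : 0 < c) (h : x * (1 - y) ≤ c * (y * (1 - x))) :
    x ≤ c * b / (1 - b + c * b) := by
  have hb0 : 0 < b := hy0.trans_le hyb
  have hcb := mul_pos hc hb0
  rw [le_div_iff₀ (by linarith)]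
  have key : x * (1 - b) ≤ c * (b * (1 - x)) := by
    calc x * (1 - b) ≤ x * (1 - y) := by gcongr
      _ ≤ c * (y * (1 - x)) := h
      _ ≤ c * (b * (1 - x)) := by
        have : 0 ≤ 1 - x := by linarith
        gcongr
  linarith

/-- Upper-bound propagation step for the PL+C model. Given `ℓ ≤ k ≤ n`, the hypothesis `ℓ < n`
excludes only `ℓ = k = n`, where every ranking lists every item. -/
theorem upper_bound_propagation (n k ℓ : ℕ) (u p : Fin n → ℝ) (i j : Fin n)
    (hp : ∀ a, 0 < p a ∧ p a ≤ 1) (hu : u i > u j)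
    (hℓ : 1 ≤ ℓ) (hℓk : ℓ ≤ k) (hkn : k ≤ n) (hℓn : ℓ < n)
    (c : ℝ)
    (hc : c = prPLCset n k u p (topSet n k i ℓ) / prPLCset n k u p (topSet n k j ℓ))
    (hc1 : c ≤ 1)
    (b : ℝ) (hb0 : 0 < b) (hb1 : b ≤ 1) (hbp : p j ≤ b) :
    p i ≤ c * b / (1 - b + c * b) := by
  have hij : i ≠ j := by rintro rfl; exact lt_irrefl _ hu
  obtain ⟨T, hT, hi, hj⟩ : ∃ T : Finset (Fin n), insert i (insert j T) = univ ∧ i ∉ T ∧ j ∉ T := by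
    refine ⟨univ \ {i, j}, ?_, by simp, by simp⟩
    ext a
    simp only [mem_insert, mem_sdiff, mem_univ, mem_singleton, true_and, iff_true]
    tauto
  have hT' : insert j (insert i T) = univ := by rw [insert_comm, hT]
  have hTcard : T.card + 2 = n := by
    have h := congrArg card hT
    rwa [card_insert_of_notMem (by simp [hij, hi]), card_insert_of_notMem hj, card_univ,
      Fintype.card_fin] at h
  rw [prPLCset_topSet, prPLCset_topSet, div_div_div_cancel_right₀ (zConst_pos hp hkn).ne',
    topMass_eq u hT hij hi hj, topMass_eq u hT' hij.symm hj hi] at hc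
  have hv : ∀ a, 0 < Real.exp (u a) := fun a => Real.exp_pos _
  have huv : Real.exp (u j) < Real.exp (u i) := Real.exp_lt_exp.mpr hu
  have top_both : ∀ {a a' : Fin n} {S : Finset (Fin n)}, a ≠ a' → a ∉ S → a' ∉ S →
      k ≤ S.card + 2 → topProb n k ℓ u a (insert a (insert a' S)) =
        1 - avoidProb (fun a => Real.exp (u a)) (Real.exp (u a)) ℓ (insert a' S) := by
    intro a a' S h h1 h2 hS
    have h3 : a ∉ insert a' S := by simp [h, h1]
    rw [topProb_of_mem u (mem_insert_self _ _) hℓk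
      (by rwa [card_insert_of_notMem h3, card_insert_of_notMem h2]), erase_insert h3]
  have top_one : ∀ {a : Fin n} {S : Finset (Fin n)}, a ∉ S → k ≤ S.card + 1 →
      topProb n k ℓ u a (insert a S) =
        1 - avoidProb (fun a => Real.exp (u a)) (Real.exp (u a)) ℓ S := by
    intro a S h1 hS
    rw [topProb_of_mem u (mem_insert_self _ _) hℓk (by rwa [card_insert_of_notMem h1]),
      erase_insert h1]
  have both_le : ∀ S ∈ T.powerset,
      (if k ≤ S.card + 2 then
        partWeight p T S * topProb n k ℓ u j (insert j (insert i S)) else 0) ≤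
      if k ≤ S.card + 2 then
        partWeight p T S * topProb n k ℓ u i (insert i (insert j S)) else 0 := by
    intro S hS
    have hiS : i ∉ S := fun h => hi (mem_powerset.mp hS h)
    have hjS : j ∉ S := fun h => hj (mem_powerset.mp hS h)
    split_ifs with hk
    · rw [top_both hij hiS hjS hk, top_both hij.symm hjS hiS hk]
      exact mul_le_mul_of_nonneg_left
        (sub_le_sub_left (avoidProb_insert_le hv huv.le ℓ S hiS hjS) 1) (partWeight_nonneg hp T S)
    · rfl
  have one_nonneg : ∀ a, a ∉ T → ∀ S ∈ T.powerset, 0 ≤ if k ≤ S.card + 1 then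
      partWeight p T S * topProb n k ℓ u a (insert a S) else 0 := by
    intro a ha S hS
    split_ifs with hk
    · rw [top_one (fun h => ha (mem_powerset.mp hS h)) hk]
      exact mul_nonneg (partWeight_nonneg hp T S)
        (sub_nonneg.mpr (avoidProb_le_one hv (hv a) ℓ S))
    · rfl
  have both_lt : (∑ S ∈ T.powerset, if k ≤ S.card + 2 then
        partWeight p T S * topProb n k ℓ u j (insert j (insert i S)) else 0) <
      ∑ S ∈ T.powerset, if k ≤ S.card + 2 then
        partWeight p T S * topProb n k ℓ u i (insert i (insert j S)) else 0 := by
    refine sum_lt_sum both_le ⟨T, mem_powerset_self T, ?_⟩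
    rw [if_pos (by omega), if_pos (by omega), top_both hij hi hj (by omega),
      top_both hij.symm hj hi (by omega)]
    exact mul_lt_mul_of_pos_left
      (sub_lt_sub_left (avoidProb_insert_lt hv huv hℓ T hi hj (by omega)) 1)
      (partWeight_self_pos hp T)
  have both_pos : 0 < ∑ S ∈ T.powerset, if k ≤ S.card + 2 then
      partWeight p T S * topProb n k ℓ u j (insert j (insert i S)) else 0 := by
    refine sum_pos' (fun S hS => ?_) ⟨T, mem_powerset_self T, ?_⟩
    · split_ifs with hk
      · rw [top_both hij.symm (fun h => hj (mem_powerset.mp hS h))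
          (fun h => hi (mem_powerset.mp hS h)) hk]
        exact mul_nonneg (partWeight_nonneg hp T S)
          (sub_nonneg.mpr (avoidProb_le_one hv (hv j) ℓ _))
      · rfl
    · rw [if_pos (by omega), top_both hij.symm hj hi (by omega)]
      exact mul_pos (partWeight_self_pos hp T)
        (sub_pos.mpr (avoidProb_lt_one hv (hv j) hℓ _))
  obtain ⟨hc0, hodds⟩ := odds_le_of_ratio (hp i).1 (hp i).2 (hp j).1 (hp j).2 both_pos
    both_lt (sum_nonneg (one_nonneg j hj))
    (sum_le_sum fun S hS => by
      split_ifs with hk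
      · rw [top_one (fun h => hi (mem_powerset.mp hS h)) hk,
          top_one (fun h => hj (mem_powerset.mp hS h)) hk]
        exact mul_le_mul_of_nonneg_left
          (sub_le_sub_left (avoidProb_antitone hv (hv j) huv.le ℓ S) 1)
          (partWeight_nonneg hp T S)
      · rfl) hc hc1
  exact le_of_odds_le (hp i).1 (hp i).2 (hp j).1 hbp hb1 hc0 hodds
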